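/- arXiv:1208.2569 — 2 statements merged into one kernel-verified Lean document; each statement's English description precedes it below -/
import Mathlib

section
/- Let f(z) = z / (1 − z²/2) for z in the open unit disk 𝔻. Then f ∈ 𝒜, f satisfies z² f'(z)/f(z)² − 1 = z²/2 for all z ∈ 𝔻 \ {0}, and f is univalent in 𝔻. -/
open Complex Set

theorem stmt14 :
    AnalyticOnNhd ℂ (fun z : ℂ => z / (1 - z ^ 2 / 2)) (Metric.ball 0 1) ∧
    (fun z : ℂ => z / (1 - z ^ 2 / 2)) 0 = 0 ∧
    deriv (fun z : ℂ => z / (1 - z ^ 2 / 2)) 0 = 1 ∧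
    (∀ z ∈ Metric.ball (0:ℂ) 1 \ {0},
      z ^ 2 * deriv (fun z : ℂ => z / (1 - z ^ 2 / 2)) z
        / ((fun z : ℂ => z / (1 - z ^ 2 / 2)) z) ^ 2 - 1 = z ^ 2 / 2) ∧
    Set.InjOn (fun z : ℂ => z / (1 - z ^ 2 / 2)) (Metric.ball 0 1) := by
  have hne : ∀ z ∈ Metric.ball (0:ℂ) 1, ∀ w ∈ Metric.ball (0:ℂ) 1, z * w ≠ 2 ∧ z * w ≠ -2 := by
    intro z hz w hw
    rw [mem_ball_zero_iff] at hz hw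
    have h : ‖z * w‖ < 2 := by
      rw [norm_mul]
      nlinarith [norm_nonneg z, norm_nonneg w]
    constructor
    · intro h2
      rw [h2] at h
      norm_num at h
    · intro h2
      rw [h2] at h
      norm_num at h
  have hden : ∀ z ∈ Metric.ball (0:ℂ) 1, 1 - z ^ 2 / 2 ≠ 0 := by
    intro z hz h
    exact (hne z hz z hz).1 (by linear_combination -2 * h)
  have hder : ∀ z ∈ Metric.ball (0:ℂ) 1,
      deriv (fun z : ℂ => z / (1 - z ^ 2 / 2)) z = (1 + z ^ 2 / 2) / (1 - z ^ 2 / 2) ^ 2 := by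
    intro z hz
    have h1 : HasDerivAt (fun z : ℂ => 1 - z ^ 2 / 2) (-z) z := by
      have := (((hasDerivAt_id z).pow 2).div_const 2).const_sub 1
      refine this.congr_deriv ?_
      simp
    have h2 := (hasDerivAt_id z).div h1 (hden z hz)
    have h3 : HasDerivAt (fun z : ℂ => z / (1 - z ^ 2 / 2))
        ((1 * (1 - z ^ 2 / 2) - id z * (-z)) / (1 - z ^ 2 / 2) ^ 2) z := h2
    rw [h3.deriv]
    congr 1
    simp only [id]
    ring
  refine ⟨?_, by simp, ?_, ?_, ?_⟩
  · intro z hz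
    exact analyticAt_id.div (by fun_prop) (hden z hz)
  · rw [hder 0 (by simp)]
    simp
  · rintro z ⟨hz, hz0⟩
    have hz0' : z ≠ 0 := hz0
    have hd := hden z hz
    rw [hder z hz]
    simp only []
    generalize hD : 1 - z ^ 2 / 2 = D at hd ⊢
    field_simp
    ring
  · intro z hz w hw h
    have h' : z / (1 - z ^ 2 / 2) = w / (1 - w ^ 2 / 2) := h
    rw [div_eq_div_iff (hden z hz) (hden w hw)] at h'
    have h2 : (z - w) * (z * w + 2) = 0 := by linear_combination 2 * h'
    rcases mul_eq_zero.mp h2 with h3 | h3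
    · exact sub_eq_zero.mp h3
    · exact absurd (eq_neg_of_add_eq_zero_left h3) (hne z hz w hw).2
end

section
/- Let f(z) = z / (1 − z²/2) for z in the open unit disk 𝔻 (so f ∈ 𝒜). Then the function F₂ defined by F₂(z) = (2 ∫₀^z u f'(u) du)^{1/2} = (4 ∫₀^z (2 + u²)/(2 − u²)² du)^{1/2}, with the principal branch of the square root, is analytic and univalent in 𝔻; that is, there is an analytic injective function F on 𝔻 with F(0) = 0, F'(0) = 1 and F(z)² = 2 ∫₀^z u f'(u) du for all z ∈ 𝔻. -/
open Complex Set

noncomputable def auxG (s : ℂ) : ℂ := 2 * (2 * s / (2 - s) + Complex.log (1 - s / 2))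

lemma aux_ne {s : ℂ} (hs : ‖s‖ < 1) : (2 - s) ≠ 0 := by
  intro h
  have h2 : s = 2 := by linear_combination -h
  rw [h2] at hs
  norm_num at hs

lemma auxG_deriv {s : ℂ} (hs : ‖s‖ < 1) :
    HasDerivAt auxG (2 * (2 + s) / (2 - s) ^ 2) s := by
  have h0 := aux_ne hs
  have hsl : (1 - s / 2) ∈ Complex.slitPlane := by
    left
    have h1 := (Complex.abs_re_le_norm s).trans_lt hs
    have h2 := (abs_lt.1 h1).2
    have h3 : (1 - s / 2).re = 1 - s.re / 2 := by simp
    rw [h3]; linarith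
  have hl : HasDerivAt (fun s : ℂ => 1 - s / 2) (-(1 / 2)) s := by
    simpa using ((hasDerivAt_id s).div_const 2).const_sub 1
  have h2 : HasDerivAt (fun s : ℂ => 2 - s) (-1) s := (hasDerivAt_id s).const_sub 2
  have h3 : HasDerivAt (fun s : ℂ => 2 * s) 2 s := by
    simpa using (hasDerivAt_id s).const_mul (2 : ℂ)
  have h4 := ((h3.div h2 h0).add (hl.clog hsl)).const_mul 2
  refine h4.congr_deriv ?_
  have h5 : (1 - s / 2) ≠ 0 := Complex.slitPlane_ne_zero hsl
  have h6 : (1 - s / 2) = (2 - s) / 2 := by ring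
  rw [h6]
  field_simp
  ring

lemma aux_re {s : ℂ} (hs : ‖s‖ < 1) : 0 < (2 * (2 + s) / (2 - s) ^ 2).re := by
  have h0 := aux_ne hs
  have hN : s.re ^ 2 + s.im ^ 2 < 1 := by
    have h1 : ‖s‖ ^ 2 < 1 := by nlinarith [norm_nonneg s]
    rw [Complex.sq_norm, Complex.normSq_apply] at h1
    nlinarith
  have hpos : 0 < Complex.normSq ((2 - s) ^ 2) := Complex.normSq_pos.2 (pow_ne_zero 2 h0)
  rw [Complex.div_re, ← add_div]
  apply div_pos _ hpos
  have hx : |s.re| < 1 := (Complex.abs_re_le_norm s).trans_lt hs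
  obtain ⟨hx1, hx2⟩ := abs_lt.1 hx
  simp [pow_two]
  have h6 : 0 < (6 - s.re) * (1 - s.re ^ 2 - s.im ^ 2) := mul_pos (by linarith) (by linarith)
  nlinarith [sq_nonneg (s.re - 3 / 8)]

lemma auxG_slope {a b : ℂ} (ha : ‖a‖ < 1) (hb : ‖b‖ < 1) (hab : a ≠ b) :
    0 < ((auxG a - auxG b) / (a - b)).re := by
  have hsub : a - b ≠ 0 := sub_ne_zero.2 hab
  have hin : ∀ t ∈ Icc (0 : ℝ) 1, ‖b + t * (a - b)‖ < 1 := by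
    intro t ht
    have := (convex_ball (0 : ℂ) 1).add_smul_sub_mem (x := b) (y := a) (by simpa) (by simpa) ht
    simpa using this
  let φ : ℝ → ℝ := fun t => (auxG (b + t * (a - b)) / (a - b)).re
  have hd : ∀ t ∈ Icc (0 : ℝ) 1, HasDerivAt φ
      ((2 * (2 + (b + t * (a - b))) / (2 - (b + t * (a - b))) ^ 2).re) t := by
    intro t ht
    have h1 : HasDerivAt (fun u : ℂ => b + u * (a - b)) (a - b) (t : ℂ) := by
      simpa using ((hasDerivAt_id (t : ℂ)).mul_const (a - b)).const_add b
    have h2 := ((auxG_deriv (hin t ht)).comp (t : ℂ) h1).div_const (a - b)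
    have h3 := h2.real_of_complex
    rw [mul_div_cancel_right₀ _ hsub] at h3
    exact h3
  obtain ⟨c, hc, h⟩ := exists_hasDerivAt_eq_slope φ _ zero_lt_one
    (fun t ht => (hd t ht).continuousAt.continuousWithinAt)
    (fun t ht => hd t (Ioo_subset_Icc_self ht))
  have hp := aux_re (hin c (Ioo_subset_Icc_self hc))
  rw [h] at hp
  simpa [φ, sub_div] using hp

theorem stmt15 :
    ∃ F : ℂ → ℂ, AnalyticOnNhd ℂ F (Metric.ball 0 1) ∧
      Set.InjOn F (Metric.ball 0 1) ∧ F 0 = 0 ∧ deriv F 0 = 1 ∧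
      ∀ z ∈ Metric.ball (0:ℂ) 1,
        F z ^ 2 = 2 * (z * ∫ t in (0:ℝ)..1,
          ((t : ℂ) * z) * deriv (fun w : ℂ => w / (1 - w ^ 2 / 2)) ((t : ℂ) * z)) := by
  have hG0 : auxG 0 = 0 := by simp [auxG]
  have hGd : DifferentiableOn ℂ auxG (Metric.ball 0 1) := fun s hs =>
    (auxG_deriv (by simpa using hs)).differentiableAt.differentiableWithinAt
  let Q : ℂ → ℂ := dslope auxG 0
  have hQd : DifferentiableOn ℂ Q (Metric.ball 0 1) :=
    (Complex.differentiableOn_dslope (Metric.ball_mem_nhds 0 one_pos)).2 hGd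
  have hQ0 : Q 0 = 1 := by
    simp only [Q, dslope_same]
    rw [(auxG_deriv (s := 0) (by simp)).deriv]; norm_num
  have hQm : ∀ s, s * Q s = auxG s := by
    intro s
    have := sub_smul_dslope auxG 0 s
    simpa [hG0, Q] using this
  have hQre : ∀ s : ℂ, ‖s‖ < 1 → 0 < (Q s).re := by
    intro s hs
    by_cases h : s = 0
    · rw [h, hQ0]; simp
    · have h1 := auxG_slope hs (b := 0) (by simp) h
      rw [hG0, ← hQm s] at h1
      simpa [h] using h1
  have hsq : ∀ z : ℂ, ‖z‖ < 1 → ‖z ^ 2‖ < 1 := by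
    intro z hz
    rw [norm_pow]; nlinarith [norm_nonneg z]
  let g : ℂ → ℂ := fun z => (Q (z ^ 2)) ^ (1 / 2 : ℂ)
  have hgd : ∀ z : ℂ, ‖z‖ < 1 → DifferentiableAt ℂ g z := by
    intro z hz
    have h1 : DifferentiableAt ℂ Q (z ^ 2) :=
      hQd.differentiableAt (Metric.isOpen_ball.mem_nhds (by simpa using hsq z hz))
    have h2 : DifferentiableAt ℂ (fun z => Q (z ^ 2)) z :=
      DifferentiableAt.comp z h1 (by fun_prop)
    exact h2.cpow_const (Or.inl (hQre _ (hsq z hz)))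
  have hg2 : ∀ z, g z ^ 2 = Q (z ^ 2) := by
    intro z
    simp only [g]
    rw [← Complex.cpow_nat_mul]; simp
  have hF2 : ∀ z, (z * g z) ^ 2 = auxG (z ^ 2) := by
    intro z; rw [mul_pow, hg2, hQm]
  have hg0 : g 0 = 1 := by simp [g, hQ0]
  refine ⟨fun z => z * g z, ?_, ?_, by simp, ?_, ?_⟩
  · apply DifferentiableOn.analyticOnNhd _ Metric.isOpen_ball
    intro z hz
    exact (differentiableAt_id.mul (hgd z (by simpa using hz))).differentiableWithinAt
  · intro z hz w hw h
    have hz' : ‖z‖ < 1 := by simpa using hz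
    have hw' : ‖w‖ < 1 := by simpa using hw
    simp only at h
    have h1 : auxG (z ^ 2) = auxG (w ^ 2) := by rw [← hF2, ← hF2, h]
    have h2 : z ^ 2 = w ^ 2 := by
      by_contra hne
      have := auxG_slope (hsq z hz') (hsq w hw') hne
      rw [h1] at this
      simp at this
    have hgg : g z = g w := by simp only [g, h2]
    rw [hgg] at h
    refine mul_right_cancel₀ ?_ h
    intro h0
    have h3 := hg2 w
    have h4 := hQre _ (hsq w hw')
    rw [← h3, h0] at h4
    simp at h4
  · have := (hasDerivAt_id (0 : ℂ)).mul (hgd 0 (by simp)).hasDerivAt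
    have h2 := this.deriv
    simp only [id, zero_mul, add_zero, one_mul, hg0] at h2
    exact h2
  · intro z hz
    have hz' : ‖z‖ < 1 := by simpa using hz
    simp only []
    rw [hF2]
    have htz : ∀ t ∈ Icc (0 : ℝ) 1, ‖(t : ℂ) * z‖ < 1 := by
      intro t ht
      rw [norm_mul, Complex.norm_real, Real.norm_of_nonneg ht.1]
      nlinarith [ht.1, ht.2, norm_nonneg z]
    have hder : ∀ u : ℂ, ‖u‖ < 1 → deriv (fun w : ℂ => w / (1 - w ^ 2 / 2)) u
        = 2 * (2 + u ^ 2) / (2 - u ^ 2) ^ 2 := by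
      intro u hu
      have h0 := aux_ne (hsq u hu)
      have h1 : 1 - u ^ 2 / 2 ≠ 0 := by
        intro h; apply h0; linear_combination 2 * h
      have h2 : HasDerivAt (fun w : ℂ => 1 - w ^ 2 / 2) (-u) u := by
        refine (((hasDerivAt_pow 2 u).div_const 2).const_sub 1).congr_deriv ?_
        simp
      have h3 := ((hasDerivAt_id u).div h2 h1).deriv
      refine h3.trans ?_
      have h6 : (1 - u ^ 2 / 2) = (2 - u ^ 2) / 2 := by ring
      rw [h6]
      simp only [id]
      field_simp
      ring
    have hint : (∫ t in (0:ℝ)..1, z *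
          (((t : ℂ) * z) * deriv (fun w : ℂ => w / (1 - w ^ 2 / 2)) ((t : ℂ) * z)))
        = ∫ t in (0:ℝ)..1, z * (((t : ℂ) * z) *
          (2 * (2 + ((t : ℂ) * z) ^ 2) / (2 - ((t : ℂ) * z) ^ 2) ^ 2)) := by
      apply intervalIntegral.integral_congr
      intro t ht
      rw [uIcc_of_le zero_le_one] at ht
      simp only []
      rw [hder _ (htz t ht)]
    rw [← intervalIntegral.integral_const_mul, hint,
      intervalIntegral.integral_eq_sub_of_hasDerivAt
        (f := fun t : ℝ => auxG (((t : ℂ) * z) ^ 2) / 2)]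
    · simp [hG0]; ring
    · intro t ht
      rw [uIcc_of_le zero_le_one] at ht
      have h1 : HasDerivAt (fun u : ℂ => (u * z) ^ 2) (2 * (t * z) * z) (t : ℂ) := by
        have := ((hasDerivAt_id (t : ℂ)).mul_const z).pow 2
        refine HasDerivAt.congr_deriv (f := fun u : ℂ => (u * z) ^ 2) this ?_
        simp
      have h2 := (((auxG_deriv (hsq _ (htz t ht))).comp (t : ℂ) h1).div_const 2).comp_ofReal
      refine h2.congr_deriv ?_
      ring
    · apply ContinuousOn.intervalIntegrable
      rw [uIcc_of_le zero_le_one]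
      have hne : ∀ t ∈ Icc (0 : ℝ) 1, (2 - ((t : ℂ) * z) ^ 2) ^ 2 ≠ 0 := fun t ht =>
        pow_ne_zero 2 (aux_ne (hsq _ (htz t ht)))
      refine ContinuousOn.mul (by fun_prop) (ContinuousOn.mul (by fun_prop) ?_)
      exact ContinuousOn.div (by fun_prop) (by fun_prop) hne
end
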